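/- arXiv:2103.10235 — 2 statements merged into one kernel-verified Lean document; each statement's English description precedes it below -/
import Mathlib

section
/- With the setup above, for every λ > 0 the cardinalities satisfy the renewal identity |A_λ| = Σ_{i∈I} |A_{λ/α_i}| + [λ ≤ 1], where [λ ≤ 1] is 1 if λ ≤ 1 and 0 otherwise. (Note the sum has only finitely many nonzero terms since A_{λ/α_i} = ∅ when α_i < λ.) -/
/-- The weight of a finite word: the product of the weights of its letters. -/
noncomputable def wordWeight {I : Type*} (α : I → ℝ) (v : List I) : ℝ :=
  (v.map α).prod

/-!
A nonempty word `i :: v` has weight at least `lam` if and only if `v` has weight at least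
`lam / α i`, so splitting off the first letter decomposes the words of weight at least `lam` into
the families on the right of the identity and, when `lam ≤ 1`, the empty word. The cardinalities
are finite: all letters of such a word have weight at least `lam`, so they come from a finite set,
on which the weights are bounded by some `c < 1`, and then `lam ≤ c ^ n` bounds the length `n`.
-/

/-- The decomposition by first letter of the set of words with a given property. The `PLift`
summand, a type with at most one element, accounts for the empty word. -/
def subtypeListEquiv {I : Type*} (p : List I → Prop) :
    {v // p v} ≃ (Σ i, {v // p (i :: v)}) ⊕ PLift (p []) where
  toFun
    | ⟨[], h⟩ => .inr ⟨h⟩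
    | ⟨i :: v, h⟩ => .inl ⟨i, v, h⟩
  invFun
    | .inl ⟨i, v, h⟩ => ⟨i :: v, h⟩
    | .inr ⟨h⟩ => ⟨[], h⟩
  left_inv := by rintro ⟨_ | _, _⟩ <;> rfl
  right_inv := by rintro (_ | _) <;> rfl

section NatCard

variable {R : Type*} [AddCommMonoidWithOne R] [TopologicalSpace R]

theorem hasSum_one_natCard (ι : Type*) [Finite ι] :
    HasSum (fun _ : ι ↦ (1 : R)) (Nat.card ι) := by
  have := Fintype.ofFinite ι
  simpa using hasSum_fintype fun _ : ι ↦ (1 : R)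

variable [ContinuousAdd R]

theorem hasSum_natCard_sigma [RegularSpace R] {ι : Type*} {β : ι → Type*} [Finite (Σ i, β i)] :
    HasSum (fun i ↦ (Nat.card (β i) : R)) (Nat.card (Σ i, β i)) := by
  have finite_fiber (i : ι) : Finite (β i) := .of_injective _ (sigma_mk_injective (i := i))
  exact (hasSum_one_natCard _).sigma fun i ↦ hasSum_one_natCard (β i)

theorem natCard_subtype_list_eq_tsum_add [T3Space R] {I : Type*} (p : List I → Prop)
    [Finite {v // p v}] [Decidable (p [])] :
    (Nat.card {v // p v} : R) = ∑' i, (Nat.card {v // p (i :: v)} : R) + if p [] then 1 else 0 := by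
  have : Finite (Σ i, {v // p (i :: v)}) :=
    .of_injective _ ((subtypeListEquiv p).symm.injective.comp Sum.inl_injective)
  rw [Nat.card_congr (subtypeListEquiv p), Nat.card_sum, Nat.cast_add, hasSum_natCard_sigma.tsum_eq]
  by_cases h : p [] <;> simp [h]

end NatCard

theorem finite_setOf_list_length_lt_and_forall_mem {I : Type*} {s : Set I} (hs : s.Finite) (n : ℕ) :
    {v : List I | v.length < n ∧ ∀ i ∈ v, i ∈ s}.Finite := by
  have := hs.to_subtype
  refine ((List.finite_length_lt s n).image (List.map Subtype.val)).subset ?_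
  rintro v ⟨hlength, hmem⟩
  obtain ⟨w, rfl⟩ : v ∈ Set.range (List.map Subtype.val) := by rwa [Set.range_list_map_coe]
  exact ⟨w, by simpa using hlength, rfl⟩

theorem exists_mem_Ico_forall_le {I X : Type*} [LinearOrder X] {s : Set I} (hs : s.Finite)
    {f : I → X} {a b : X} (hab : a < b) (hf : ∀ i ∈ s, f i < b) :
    ∃ c ∈ Set.Ico a b, ∀ i ∈ s, f i ≤ c := by
  obtain ⟨c, hc, le_c⟩ :=
    Set.exists_max_image _ id ((hs.image f).insert a) (Set.insert_nonempty _ _)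
  simp only [Set.forall_mem_insert, Set.forall_mem_image, id] at le_c
  refine ⟨c, ⟨le_c.1, ?_⟩, fun i hi ↦ le_c.2 hi⟩
  obtain rfl | ⟨i, hi, rfl⟩ := hc
  exacts [hab, hf i hi]

section WordWeight

variable {I : Type*} {α : I → ℝ}

theorem wordWeight_nil : wordWeight α [] = 1 := rfl

theorem wordWeight_cons (i : I) (v : List I) : wordWeight α (i :: v) = α i * wordWeight α v :=
  List.prod_cons

theorem wordWeight_le_pow_length {v : List I} (hv : ∀ i ∈ v, 0 ≤ α i) {c : ℝ}
    (hc : ∀ i ∈ v, α i ≤ c) : wordWeight α v ≤ c ^ v.length := by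
  simpa [wordWeight] using List.prod_map_le_prod_map₀ α (fun _ ↦ c) hv hc

theorem wordWeight_le_of_mem {v : List I} (hv₀ : ∀ i ∈ v, 0 ≤ α i) (hv₁ : ∀ i ∈ v, α i ≤ 1)
    {i : I} (hi : i ∈ v) : wordWeight α v ≤ α i := by
  classical
  have erase_le_one : wordWeight α (v.erase i) ≤ 1 := by
    simpa using wordWeight_le_pow_length (fun j hj ↦ hv₀ j (List.mem_of_mem_erase hj))
      fun j hj ↦ hv₁ j (List.mem_of_mem_erase hj)
  calc wordWeight α v = α i * wordWeight α (v.erase i) := (List.prod_map_erase α hi).symm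
    _ ≤ α i := mul_le_of_le_one_right (hv₀ i hi) erase_le_one

theorem le_wordWeight_cons_iff {i : I} (hi : 0 < α i) (lam : ℝ) (v : List I) :
    lam ≤ wordWeight α (i :: v) ↔ lam / α i ≤ wordWeight α v := by
  rw [wordWeight_cons, div_le_iff₀' hi]

theorem finite_setOf_le_wordWeight (hα₀ : ∀ i, 0 ≤ α i) (hα₁ : ∀ i, α i < 1) {lam : ℝ}
    (hlam : 0 < lam) (hfin : {i | lam ≤ α i}.Finite) :
    {v : List I | lam ≤ wordWeight α v}.Finite := by
  obtain ⟨c, ⟨c_nonneg, c_lt_one⟩, le_c⟩ :=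
    exists_mem_Ico_forall_le hfin zero_lt_one fun i _ ↦ hα₁ i
  obtain ⟨n, hn⟩ : ∃ n : ℕ, c ^ n < lam := exists_pow_lt_of_lt_one hlam c_lt_one
  refine (finite_setOf_list_length_lt_and_forall_mem hfin n).subset fun v (hv : lam ≤ _) ↦ ?_
  have le_letter : ∀ i ∈ v, lam ≤ α i := fun i hi ↦
    hv.trans (wordWeight_le_of_mem (fun j _ ↦ hα₀ j) (fun j _ ↦ (hα₁ j).le) hi)
  have length_lt : v.length < n := by
    refine lt_of_not_ge fun n_le ↦ hn.not_ge ?_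
    calc lam ≤ wordWeight α v := hv
      _ ≤ c ^ v.length :=
        wordWeight_le_pow_length (fun i _ ↦ hα₀ i) fun i hi ↦ le_c i (le_letter i hi)
      _ ≤ c ^ n := pow_le_pow_of_le_one c_nonneg c_lt_one.le n_le
  exact ⟨length_lt, le_letter⟩

end WordWeight

theorem card_words_renewal_general {I : Type*} (α : I → ℝ) (hpos : ∀ i, 0 < α i)
    (hlt : ∀ i, α i < 1) (lam : ℝ) (hlam : 0 < lam) (hfin : {i | lam ≤ α i}.Finite) :
    (Nat.card {v : List I | lam ≤ wordWeight α v} : ℝ) =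
      (∑' i : I, (Nat.card {v : List I | lam / α i ≤ wordWeight α v} : ℝ)) +
        (if lam ≤ 1 then 1 else 0) := by
  have : Finite {v // lam ≤ wordWeight α v} :=
    finite_setOf_le_wordWeight (fun i ↦ (hpos i).le) hlt hlam hfin
  calc (Nat.card {v : List I | lam ≤ wordWeight α v} : ℝ)
    _ = ∑' i, (Nat.card {v : List I // lam ≤ wordWeight α (i :: v)} : ℝ) +
          if lam ≤ wordWeight α [] then 1 else 0 :=
        natCard_subtype_list_eq_tsum_add fun v ↦ lam ≤ wordWeight α v
    _ = _ := by
        rw [wordWeight_nil]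
        simp only [Set.coe_ofPred, le_wordWeight_cons_iff (hpos _)]

/-- Renewal identity: `|A_λ| = Σ_{i∈I} |A_{λ/α_i}| + [λ ≤ 1]`, where
`A_λ = {v ∈ W(I) : α_v ≥ λ}`. -/
theorem card_words_renewal {I : Type*} [Countable I] (α : I → ℝ)
    (hpos : ∀ i, 0 < α i) (hlt : ∀ i, α i < 1) (hsum : HasSum α 1)
    (lam : ℝ) (hlam : 0 < lam) :
    (Nat.card {v : List I | lam ≤ wordWeight α v} : ℝ) =
      (∑' i : I, (Nat.card {v : List I | lam / α i ≤ wordWeight α v} : ℝ)) +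
        (if lam ≤ 1 then 1 else 0) :=
  card_words_renewal_general α hpos hlt lam hlam <| by
    simpa using hsum.summable.tendsto_cofinite_zero.eventually_lt_const hlam
end

section
/- Suppose (α_i)_{i∈I} are positive, sum to 1, the group generated by {−log α_i} is not cyclic (higher rank), and H = −Σ α_i log α_i < ∞. Then λ|A_λ| → 1/H as λ → 0+, i.e. |A_λ| ~ 1/(Hλ). -/
open Filter MeasureTheory Set
open scoped Topology

section DenseSubgroup

theorem exists_sub_eq_of_mem_addSubgroupClosure {G : Type*} [AddCommGroup G] {X : Set G} {g : G}
    (hg : g ∈ AddSubgroup.closure X) :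
    ∃ a ∈ AddSubmonoid.closure X, ∃ b ∈ AddSubmonoid.closure X, a - b = g := by
  rw [← AddSubgroup.mem_toAddSubmonoid, AddSubgroup.closure_toAddSubmonoid,
    AddSubmonoid.closure_union, AddSubmonoid.mem_sup] at hg
  obtain ⟨a, ha, c, hc, rfl⟩ := hg
  rw [AddSubmonoid.closure_neg, AddSubmonoid.mem_neg] at hc
  exact ⟨a, ha, -c, hc, sub_neg_eq_add a c⟩

theorem dense_addSubgroupClosure_range_of_not_exists_zmultiples {I : Type*} {x : I → ℝ}
    (hx : ¬ ∃ c : ℝ, ∀ i, ∃ k : ℤ, x i = k * c) :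
    Dense (AddSubgroup.closure (range x) : Set ℝ) := by
  refine (AddSubgroup.dense_or_cyclic _).resolve_right fun ⟨c, hc⟩ ↦ hx ⟨c, fun i ↦ ?_⟩
  have hi : x i ∈ AddSubgroup.closure {c} := hc ▸ AddSubgroup.subset_closure (mem_range_self i)
  obtain ⟨k, hk⟩ := AddSubgroup.mem_closure_singleton.1 hi
  exact ⟨k, by rw [← hk, zsmul_eq_mul]⟩

theorem nontrivial_of_not_exists_zmultiples {I : Type*} {x : I → ℝ}
    (hx : ¬ ∃ c : ℝ, ∀ i, ∃ k : ℤ, x i = k * c) : Nontrivial I := by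
  by_contra h
  have := not_nontrivial_iff_subsingleton.1 h
  cases isEmpty_or_nonempty I with
  | inl _ => exact hx ⟨0, isEmptyElim⟩
  | inr hI =>
    obtain ⟨i⟩ := hI
    exact hx ⟨x i, fun j ↦ ⟨1, by rw [Subsingleton.elim j i, Int.cast_one, one_mul]⟩⟩

-- Write `y = k * a + r` with `0 ≤ r < a` and replace `⌈r / (b - a)⌉` of the `k` copies of `a`
-- by `b`; for large `y` there are enough copies to replace.
theorem eventually_exists_nsmul_add_nsmul_mem_Icc {a b : ℝ} (ha : 0 < a) (hab : a < b) :
    ∀ᶠ y in atTop, ∃ m n : ℕ, m • a + n • b ∈ Icc y (y + (b - a)) := by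
  have hg : 0 < b - a := sub_pos.2 hab
  filter_upwards [eventually_ge_atTop 0, eventually_ge_atTop (⌈a / (b - a)⌉₊ * a)] with y hy₀ hy
  set k := ⌊y / a⌋₊
  set r := y - k * a
  set j := ⌈r / (b - a)⌉₊
  have hr₀ : 0 ≤ r := sub_nonneg.2 ((le_div_iff₀ ha).1 (Nat.floor_le (by positivity)))
  have hra : r ≤ a := by
    have : y < (k + 1) * a := (div_lt_iff₀ ha).1 (Nat.lt_floor_add_one _)
    linarith
  have hjk : j ≤ k := calc
    j ≤ ⌈a / (b - a)⌉₊ := Nat.ceil_mono (div_le_div_of_nonneg_right hra hg.le)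
    _ ≤ k := Nat.le_floor ((le_div_iff₀ ha).2 hy)
  have hrj : r ≤ j * (b - a) := (div_le_iff₀ hg).1 (Nat.le_ceil _)
  have hjr : j * (b - a) ≤ r + (b - a) := by
    rw [← le_div_iff₀ hg, add_div, div_self hg.ne']
    exact (Nat.ceil_lt_add_one (by positivity)).le
  have hsum : (k - j) • a + j • b = y - r + j * (b - a) := by
    simp only [nsmul_eq_mul, Nat.cast_sub hjk]
    ring
  refine ⟨k - j, j, ?_⟩
  rw [hsum]
  constructor <;> linarith

theorem eventually_exists_mem_addSubmonoidClosure_Icc {X : Set ℝ} (hX : ∀ a ∈ X, 0 ≤ a)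
    (hdense : Dense (AddSubgroup.closure X : Set ℝ)) {ε : ℝ} (hε : 0 < ε) :
    ∀ᶠ y in atTop, ∃ s ∈ AddSubmonoid.closure X, s ∈ Icc y (y + ε) := by
  have hnonneg : ∀ a ∈ AddSubmonoid.closure X, 0 ≤ a := fun a ha ↦
    (AddSubmonoid.closure_le (S := AddSubmonoid.nonneg ℝ)).2 hX ha
  obtain ⟨g, hg, hg₀, hgε⟩ := hdense.exists_between hε
  obtain ⟨a, ha, b, hb, rfl⟩ := exists_sub_eq_of_mem_addSubgroupClosure hg
  have ha₀ : 0 < a := (hnonneg b hb).trans_lt (sub_pos.1 hg₀)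
  have hab : b + a < a + a := by linarith
  filter_upwards [eventually_exists_nsmul_add_nsmul_mem_Icc
    (add_pos_of_nonneg_of_pos (hnonneg b hb) ha₀) hab] with y ⟨m, n, hmn⟩
  refine ⟨m • (b + a) + n • (a + a), ?_, Icc_subset_Icc_right (by linarith) hmn⟩
  exact add_mem (nsmul_mem (add_mem hb ha) m) (nsmul_mem (add_mem ha ha) n)

end DenseSubgroup

section ExtremalAverages

theorem summable_mul_of_abs_le {ι : Type*} {p f : ι → ℝ} {C : ℝ} (hp : ∀ i, 0 ≤ p i)
    (hsum : Summable p) (hf : ∀ i, |f i| ≤ C) : Summable fun i ↦ p i * f i :=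
  .of_norm_bounded (hsum.mul_right C) fun i ↦ by
    rw [norm_mul, Real.norm_of_nonneg (hp i)]
    exact mul_le_mul_of_nonneg_left (hf i) (hp i)

theorem tendsto_tsum_mul_of_tendsto_zero {ι κ : Type*} {l : Filter κ} {p : ι → ℝ}
    {f : ι → κ → ℝ} {C : ℝ} (hp : ∀ i, 0 ≤ p i) (hsum : Summable p) (hf : ∀ i k, |f i k| ≤ C)
    (hlim : ∀ i, Tendsto (f i) l (𝓝 0)) : Tendsto (fun k ↦ ∑' i, p i * f i k) l (𝓝 0) := by
  have := tendsto_tsum_of_dominated_convergence (hsum.mul_right C)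
    (fun i ↦ (hlim i).const_mul (p i)) (.of_forall fun k i ↦ by
      rw [norm_mul, Real.norm_of_nonneg (hp i)]
      exact mul_le_mul_of_nonneg_left (hf i k) (hp i))
  simpa only [mul_zero, tsum_zero] using this

-- Since `|a| = 2 a⁺ - a`, it is enough that the averages of the positive parts vanish.
theorem tendsto_tsum_mul_abs_of_eventually_lt {ι κ : Type*} {l : Filter κ} {p : ι → ℝ}
    {f : ι → κ → ℝ} {C : ℝ} (hp : ∀ i, 0 ≤ p i) (hsum : Summable p) (hf : ∀ i k, |f i k| ≤ C)
    (hlim : Tendsto (fun k ↦ ∑' i, p i * f i k) l (𝓝 0))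
    (hlt : ∀ i, ∀ b > 0, ∀ᶠ k in l, f i k < b) :
    Tendsto (fun k ↦ ∑' i, p i * |f i k|) l (𝓝 0) := by
  have hposPart (i k) : |(f i k)⁺| ≤ C := by
    rw [abs_of_nonneg (posPart_nonneg _)]
    exact (sup_le (le_abs_self _) (abs_nonneg _)).trans (hf i k)
  have hposPart_lim (i) : Tendsto (fun k ↦ (f i k)⁺) l (𝓝 0) :=
    tendsto_order.2 ⟨fun b hb ↦ .of_forall fun k ↦ hb.trans_le (posPart_nonneg _),
      fun b hb ↦ (hlt i b hb).mono fun k hk ↦ max_lt hk hb⟩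
  have hdecomp (k) : ∑' i, p i * |f i k| = 2 * ∑' i, p i * (f i k)⁺ - ∑' i, p i * f i k := by
    rw [← tsum_mul_left, ← ((summable_mul_of_abs_le hp hsum (hposPart · k)).mul_left 2).tsum_sub
      (summable_mul_of_abs_le hp hsum (hf · k))]
    refine tsum_congr fun i ↦ ?_
    have := abs_add_eq_two_nsmul_posPart (f i k)
    rw [two_nsmul] at this
    linear_combination p i * this
  simpa [hdecomp] using
    ((tendsto_tsum_mul_of_tendsto_zero hp hsum hposPart hposPart_lim).const_mul 2).sub hlim

theorem tendsto_zero_of_tendsto_tsum_mul_of_eventually_lt {ι κ : Type*} {l : Filter κ} {p : ι → ℝ}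
    {f : ι → κ → ℝ} {C : ℝ} (hp : ∀ i, 0 < p i) (hsum : Summable p) (hf : ∀ i k, |f i k| ≤ C)
    (hlim : Tendsto (fun k ↦ ∑' i, p i * f i k) l (𝓝 0))
    (hlt : ∀ i, ∀ b > 0, ∀ᶠ k in l, f i k < b) (i : ι) : Tendsto (f i) l (𝓝 0) := by
  have hbound (k) : |f i k| ≤ (p i)⁻¹ * ∑' i, p i * |f i k| := by
    rw [← div_eq_inv_mul, le_div_iff₀' (hp i)]
    exact (summable_mul_of_abs_le (fun i ↦ (hp i).le) hsum fun i ↦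
      (abs_abs _).trans_le (hf i k)).le_tsum i fun j _ ↦ mul_nonneg (hp j).le (abs_nonneg _)
  refine squeeze_zero_norm hbound ?_
  simpa using
    (tendsto_tsum_mul_abs_of_eventually_lt (fun i ↦ (hp i).le) hsum hf hlim hlt).const_mul (p i)⁻¹

end ExtremalAverages

section RenewalTheorem

variable {I ι : Type*} {p x : I → ℝ} {Z : ℝ → ℝ} {C J M : ℝ} {l : Filter ι} {t : ι → ℝ}

theorem tendsto_comp_sub_of_mem_addSubmonoidClosure (hp : ∀ i, 0 < p i) (hsum : HasSum p 1)
    (hC : ∀ u, |Z u| ≤ C)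
    (hZ : Tendsto (fun u ↦ Z u - ∑' i, p i * Z (u - x i)) atTop (𝓝 0))
    (hM : ∀ b > M, ∀ᶠ u in atTop, Z u < b) {s : ℝ} (hs : s ∈ AddSubmonoid.closure (range x))
    (ht : Tendsto t l atTop) (hlim : Tendsto (fun k ↦ Z (t k)) l (𝓝 M)) :
    Tendsto (fun k ↦ Z (t k - s)) l (𝓝 M) := by
  have hshift (c : ℝ) {t : ι → ℝ} (ht : Tendsto t l atTop) : Tendsto (fun k ↦ t k - c) l atTop :=
    tendsto_atTop_add_const_right l (-c) ht
  induction hs using AddSubmonoid.closure_induction generalizing t with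
  | mem s hs =>
    obtain ⟨i, rfl⟩ := hs
    have hmean : Tendsto (fun k ↦ ∑' j, p j * (Z (t k - x j) - M)) l (𝓝 0) := by
      have hcentre (u) : ∑' j, p j * (Z (u - x j) - M) = ∑' j, p j * Z (u - x j) - M := by
        simp only [mul_sub]
        rw [(summable_mul_of_abs_le (fun j ↦ (hp j).le) hsum.summable fun j ↦ hC _).tsum_sub
          (hsum.summable.mul_right M), tsum_mul_right, hsum.tsum_eq, one_mul]
      simpa [hcentre] using (hlim.sub_const M).sub (hZ.comp ht)
    have := tendsto_zero_of_tendsto_tsum_mul_of_eventually_lt hp hsum.summable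
      (fun j k ↦ (abs_sub _ _).trans (add_le_add_left (hC (t k - x j)) |M|)) hmean
      (fun j b hb ↦ ((hshift (x j) ht).eventually (hM (M + b) (by linarith))).mono
        fun k hk ↦ by linarith) i
    simpa using this.add_const M
  | zero => simpa using hlim
  | add a b _ _ iha ihb =>
    simpa only [sub_sub] using ihb (hshift a ht) (iha ht hlim)

theorem exists_seq_tendsto_limsup_comp_sub (hp : ∀ i, 0 < p i) (hsum : HasSum p 1)
    (hC : ∀ u, |Z u| ≤ C)
    (hZ : Tendsto (fun u ↦ Z u - ∑' i, p i * Z (u - x i)) atTop (𝓝 0)) :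
    ∃ t : ℕ → ℝ, Tendsto t atTop atTop ∧ ∀ s ∈ AddSubmonoid.closure (range x),
      Tendsto (fun n ↦ Z (t n - s)) atTop (𝓝 (limsup Z atTop)) := by
  have hle : IsBoundedUnder (· ≤ ·) atTop Z := isBoundedUnder_of ⟨C, fun u ↦ (abs_le.1 (hC u)).2⟩
  have hge : IsBoundedUnder (· ≥ ·) atTop Z := isBoundedUnder_of ⟨-C, fun u ↦ (abs_le.1 (hC u)).1⟩
  obtain ⟨t, hlim, ht⟩ := exists_seq_tendsto_limsup hge.isCoboundedUnder_le hle
  exact ⟨t, ht, fun s hs ↦ tendsto_comp_sub_of_mem_addSubmonoidClosure hp hsum hC hZ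
    (fun b hb ↦ eventually_lt_of_limsup_lt hb hle) hs ht hlim⟩

/-- Schmidt's one-sided Tauberian condition, in the form with additive shifts:
`liminf (f t - f s) ≥ 0` as `s → ∞` and `0 ≤ t - s → 0`. It transfers limits along a nearly dense
set of shifts to all shifts. -/
def SlowlyDecreasing (f : ℝ → ℝ) : Prop :=
  ∀ ε > 0, ∃ δ > 0, ∀ᶠ s in atTop, ∀ t ∈ Icc s (s + δ), f s ≤ f t + ε

theorem SlowlyDecreasing.eventually_abs_comp_sub_sub_le {S : Set ℝ} (hZ : SlowlyDecreasing Z)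
    (ht : Tendsto t l atTop) (hS : ∀ δ > 0, ∀ᶠ y in atTop, ∃ s ∈ S, s ∈ Icc y (y + δ))
    (hM : ∀ s ∈ S, Tendsto (fun k ↦ Z (t k - s)) l (𝓝 M)) {ε : ℝ} (hε : 0 < ε) :
    ∀ᶠ y in atTop, ∀ᶠ k in l, |Z (t k - y) - M| ≤ ε := by
  obtain ⟨δ, hδ, hdecr⟩ := hZ (ε / 2) (half_pos hε)
  have hdecr_shift (c : ℝ) : ∀ᶠ k in l, ∀ u ∈ Icc (t k - c) (t k - c + δ),
      Z (t k - c) ≤ Z u + ε / 2 :=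
    (tendsto_atTop_add_const_right l (-c) ht).eventually hdecr
  filter_upwards [hS δ hδ, (tendsto_atTop_add_const_right atTop (-δ) tendsto_id).eventually
    (hS δ hδ)] with y ⟨s, hs, hys, hsy⟩ ⟨r, hr, hyr, hry⟩
  simp only [id_eq] at hyr hry
  filter_upwards [hdecr_shift s, hdecr_shift y,
    (hM s hs).eventually (lt_mem_nhds (show M - ε / 2 < M by linarith)),
    (hM r hr).eventually (gt_mem_nhds (show M < M + ε / 2 by linarith))] with
    k hk_s hk_y hk_lt hk_gt
  have hlower := hk_s (t k - y) ⟨by linarith, by linarith⟩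
  have hupper := hk_y (t k - r) ⟨by linarith, by linarith⟩
  rw [abs_le]
  constructor <;> linarith

theorem abs_integral_sub_measureReal_univ_mul_le {α : Type*} [MeasurableSpace α] {ν : Measure α}
    [IsFiniteMeasure ν] {f : α → ℝ} (hf : Integrable f ν) (M ε : ℝ) :
    |∫ y, f y ∂ν - ν.real univ * M| ≤ ∫ y, (|f y - M| - ε)⁺ ∂ν + ε * ν.real univ := by
  have hexcess : Integrable (fun y ↦ (|f y - M| - ε)⁺) ν :=
    ((hf.sub (integrable_const M)).abs.sub (integrable_const ε)).pos_part
  calc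
    _ = ‖∫ y, (f y - M) ∂ν‖ := by
      rw [integral_sub hf (integrable_const M), integral_const, smul_eq_mul, Real.norm_eq_abs]
    _ ≤ ∫ y, ((|f y - M| - ε)⁺ + ε) ∂ν :=
      norm_integral_le_of_norm_le (hexcess.add (integrable_const ε))
        (.of_forall fun y ↦ sub_le_iff_le_add.1 (le_posPart _))
    _ = _ := by
      rw [integral_add hexcess (integrable_const ε), integral_const, smul_eq_mul, mul_comm]

theorem abs_sub_measureReal_univ_mul_le_of_tendsto_integral {α : Type*} [MeasurableSpace α]
    {ν : Measure α} [IsFiniteMeasure ν] [l.NeBot] [l.IsCountablyGenerated] {f : ι → α → ℝ} {ε : ℝ}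
    (hf : ∀ k, Measurable (f k)) (hC : ∀ k y, |f k y| ≤ C)
    (hJ : Tendsto (fun k ↦ ∫ y, f k y ∂ν) l (𝓝 J))
    (hM : ∀ᵐ y ∂ν, ∀ᶠ k in l, |f k y - M| ≤ ε) :
    |J - ν.real univ * M| ≤ ε * ν.real univ := by
  have hexcess_le (k y) : ‖(|f k y - M| - ε)⁺‖ ≤ C + |M| + |ε| := by
    rw [Real.norm_of_nonneg (posPart_nonneg _)]
    have := (abs_sub (f k y) M).trans (add_le_add_left (hC k y) |M|)
    exact sup_le (by linarith [neg_abs_le ε]) (by linarith [abs_nonneg (f k y - M), abs_nonneg ε])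
  have hexcess_lim : Tendsto (fun k ↦ ∫ y, (|f k y - M| - ε)⁺ ∂ν) l (𝓝 0) := by
    rw [← integral_zero α ℝ (μ := ν)]
    refine tendsto_integral_filter_of_dominated_convergence (fun _ ↦ C + |M| + |ε|)
      (.of_forall fun k ↦
        ((((hf k).sub_const M).norm.sub_const ε).max measurable_const).aestronglyMeasurable)
      (.of_forall fun k ↦ .of_forall (hexcess_le k)) (integrable_const _) ?_
    filter_upwards [hM] with y hy
    exact tendsto_const_nhds.congr' (hy.mono fun k hk ↦
      (posPart_of_nonpos (sub_nonpos.2 hk)).symm)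
  have hbound (k) := abs_integral_sub_measureReal_univ_mul_le
    (.of_bound (hf k).aestronglyMeasurable C (.of_forall (hC k)) : Integrable (f k) ν) M ε
  simpa using le_of_tendsto_of_tendsto' (hJ.sub_const _).abs (hexcess_lim.add_const _) hbound

theorem measureReal_univ_mul_eq_of_tendsto_integral_comp_sub [l.NeBot] [l.IsCountablyGenerated]
    {ν : Measure ℝ} [IsFiniteMeasure ν] (hν : ∀ᵐ y ∂ν, 0 ≤ y) (hZ : Measurable Z)
    (hC : ∀ u, |Z u| ≤ C) (hJ : Tendsto (fun u ↦ ∫ y, Z (u - y) ∂ν) atTop (𝓝 J))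
    (ht : Tendsto t l atTop)
    (hM : ∀ ε > 0, ∀ᶠ y in atTop, ∀ᶠ k in l, |Z (t k - y) - M| ≤ ε) :
    ν.real univ * M = J := by
  have hbound : ∀ ε > 0, |J - ν.real univ * M| ≤ ε * ν.real univ := by
    intro ε hε
    obtain ⟨L, hL⟩ := eventually_atTop.1 (hM ε hε)
    refine abs_sub_measureReal_univ_mul_le_of_tendsto_integral (f := fun k y ↦ Z (t k - L - y))
      (fun k ↦ by fun_prop) (fun k y ↦ hC _)
      (hJ.comp (tendsto_atTop_add_const_right l (-L) ht)) (hν.mono fun y hy ↦ ?_)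
    simpa only [sub_sub] using hL (L + y) (by linarith)
  have hlim : Tendsto (fun ε ↦ ε * ν.real univ) (𝓝[>] 0) (𝓝 (0 * ν.real univ)) :=
    (tendsto_id.mono_left nhdsWithin_le_nhds).mul_const _
  have := ge_of_tendsto hlim (eventually_mem_nhdsWithin.mono hbound)
  rw [zero_mul] at this
  exact (sub_eq_zero.1 (abs_nonpos_iff.1 this)).symm

/-- The integrated tail of the step distribution `∑ i, p i • δ_{x i}`, that is, the measure on
`(0, ∞)` with density `y ↦ ∑_{y ≤ x i} p i`, encoded as a sum of restrictions of Lebesgue measure.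
It is the unnormalised stationary delay distribution of the renewal process; the average of a
solution of the renewal equation against it is asymptotically conserved. -/
noncomputable def integratedTail (p x : I → ℝ) : Measure ℝ :=
  .sum fun i ↦ ENNReal.ofReal (p i) • volume.restrict (Ioc 0 (x i))

theorem ae_integratedTail_pos : ∀ᵐ y ∂integratedTail p x, 0 < y :=
  (Measure.ae_sum_iff' measurableSet_Ioi).2 fun _ ↦
    Measure.ae_smul_measure ((ae_restrict_mem measurableSet_Ioc).mono fun _ hy ↦ hy.1) _

theorem isFiniteMeasure_integratedTail (hp : ∀ i, 0 ≤ p i) (hx : ∀ i, 0 ≤ x i)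
    (hpx : Summable fun i ↦ p i * x i) : IsFiniteMeasure (integratedTail p x) where
  measure_univ_lt_top := by
    rw [integratedTail, Measure.sum_apply _ .univ]
    simp only [Measure.smul_apply, Measure.restrict_apply_univ, Real.volume_Ioc, sub_zero,
      smul_eq_mul, ← ENNReal.ofReal_mul (hp _)]
    rw [← ENNReal.ofReal_tsum_of_nonneg (fun i ↦ mul_nonneg (hp i) (hx i)) hpx]
    exact ENNReal.ofReal_lt_top

theorem hasSum_integral_integratedTail (hp : ∀ i, 0 ≤ p i) (hx : ∀ i, 0 ≤ x i) {f : ℝ → ℝ}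
    (hf : Integrable f (integratedTail p x)) :
    HasSum (fun i ↦ p i * ∫ y in 0..x i, f y) (∫ y, f y ∂integratedTail p x) := by
  refine (hasSum_integral_measure hf).congr_fun fun i ↦ ?_
  rw [integral_smul_measure, ENNReal.toReal_ofReal (hp i), smul_eq_mul,
    intervalIntegral.integral_of_le (hx i)]

theorem measureReal_integratedTail_univ (hp : ∀ i, 0 ≤ p i) (hx : ∀ i, 0 ≤ x i)
    (hpx : Summable fun i ↦ p i * x i) :
    (integratedTail p x).real univ = ∑' i, p i * x i := by
  have := isFiniteMeasure_integratedTail hp hx hpx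
  simpa using (hasSum_integral_integratedTail hp hx (integrable_const 1)).tsum_eq.symm

theorem SlowlyDecreasing.tsum_mul_mul_eq_of_tendsto_comp_sub [l.NeBot] [l.IsCountablyGenerated]
    (hdecr : SlowlyDecreasing Z) (hp : ∀ i, 0 ≤ p i) (hx : ∀ i, 0 ≤ x i)
    (hpx : Summable fun i ↦ p i * x i) (hdense : Dense (AddSubgroup.closure (range x) : Set ℝ))
    (hmeas : Measurable Z) (hC : ∀ u, |Z u| ≤ C)
    (hJ : Tendsto (fun u ↦ ∫ y, Z (u - y) ∂integratedTail p x) atTop (𝓝 J))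
    (ht : Tendsto t l atTop)
    (hM : ∀ s ∈ AddSubmonoid.closure (range x), Tendsto (fun k ↦ Z (t k - s)) l (𝓝 M)) :
    (∑' i, p i * x i) * M = J := by
  have := isFiniteMeasure_integratedTail hp hx hpx
  rw [← measureReal_integratedTail_univ hp hx hpx]
  exact measureReal_univ_mul_eq_of_tendsto_integral_comp_sub
    (ae_integratedTail_pos.mono fun _ ↦ le_of_lt) hmeas hC hJ ht fun ε hε ↦
    hdecr.eventually_abs_comp_sub_sub_le ht (fun δ hδ ↦
      eventually_exists_mem_addSubmonoidClosure_Icc (forall_mem_range.2 hx) hdense hδ) hM hε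

theorem SlowlyDecreasing.tendsto_of_renewal (hdecr : SlowlyDecreasing Z)
    (hp : ∀ i, 0 < p i) (hsum : HasSum p 1) (hx : ∀ i, 0 < x i)
    (hpx : Summable fun i ↦ p i * x i)
    (hdense : Dense (AddSubgroup.closure (range x) : Set ℝ))
    (hmeas : Measurable Z) (hC : ∀ u, |Z u| ≤ C)
    (hZ : Tendsto (fun u ↦ Z u - ∑' i, p i * Z (u - x i)) atTop (𝓝 0))
    (hJ : Tendsto (fun u ↦ ∫ y, Z (u - y) ∂integratedTail p x) atTop (𝓝 J)) :
    Tendsto Z atTop (𝓝 (J / ∑' i, p i * x i)) := by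
  have hp₀ i := (hp i).le
  have hx₀ i := (hx i).le
  have hmean_pos : 0 < ∑' i, p i * x i := by
    obtain ⟨i⟩ : Nonempty I := not_isEmpty_iff.1 fun _ ↦ one_ne_zero (hsum.unique hasSum_empty)
    exact hpx.tsum_pos (fun i ↦ mul_nonneg (hp₀ i) (hx₀ i)) i (mul_pos (hp i) (hx i))
  have hunique {M : ℝ} {t : ℕ → ℝ} (ht : Tendsto t atTop atTop)
      (hM : ∀ s ∈ AddSubmonoid.closure (range x), Tendsto (fun n ↦ Z (t n - s)) atTop (𝓝 M)) :
      M = J / ∑' i, p i * x i := by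
    rw [eq_div_iff hmean_pos.ne', mul_comm]
    exact hdecr.tsum_mul_mul_eq_of_tendsto_comp_sub hp₀ hx₀ hpx hdense hmeas hC hJ ht hM
  have hlimsup : limsup Z atTop = J / ∑' i, p i * x i := by
    obtain ⟨t, ht, hM⟩ := exists_seq_tendsto_limsup_comp_sub hp hsum hC hZ
    exact hunique ht hM
  have hlimsup_neg : -limsup (fun u ↦ -Z u) atTop = J / ∑' i, p i * x i := by
    obtain ⟨t, ht, hM⟩ := exists_seq_tendsto_limsup_comp_sub (Z := fun u ↦ -Z u) (x := x) hp hsum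
      (fun u ↦ (abs_neg _).trans_le (hC u))
      (by simpa [tsum_neg, sub_eq_add_neg, add_comm] using hZ.neg)
    exact hunique ht fun s hs ↦ by simpa using (hM s hs).neg
  refine tendsto_order.2 ⟨fun b hb ↦ ?_, fun b hb ↦ ?_⟩
  · exact (eventually_lt_of_limsup_lt (lt_neg.1 (hb.trans_eq hlimsup_neg.symm))
      (isBoundedUnder_of ⟨C, fun u ↦ neg_le.1 (abs_le.1 (hC u)).1⟩)).mono fun u ↦ neg_lt_neg_iff.1
  · exact eventually_lt_of_limsup_lt (hlimsup.trans_lt hb)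
      (isBoundedUnder_of ⟨C, fun u ↦ (abs_le.1 (hC u)).2⟩)

end RenewalTheorem

section ConservationLaw

variable {I : Type*} {p x : I → ℝ} {Z z : ℝ → ℝ}

theorem intervalIntegrable_of_forall_abs_le (hmeas : Measurable Z)
    (hbdd : ∀ t, ∃ C, ∀ s ≤ t, |Z s| ≤ C) (a b : ℝ) : IntervalIntegrable Z volume a b := by
  obtain ⟨C, hC⟩ := hbdd (max a b)
  rw [intervalIntegrable_iff]
  exact .of_bound (by simp [uIoc]) hmeas.aestronglyMeasurable C
    ((ae_restrict_mem measurableSet_uIoc).mono fun s hs ↦ hC s hs.2)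

theorem integral_comp_sub_eq_integral_sub_comp_sub (hint : ∀ a b, IntervalIntegrable Z volume a b)
    (hneg : ∀ t < 0, Z t = 0) (t : ℝ) {c : ℝ} (hc : 0 ≤ c) :
    ∫ y in 0..c, Z (t - y) = ∫ s in 0..t, (Z s - Z (s - c)) := by
  have hzero : ∫ s in -c..0, Z s = 0 := by
    rw [intervalIntegral.integral_of_le (neg_nonpos.2 hc), integral_Ioc_eq_integral_Ioo]
    exact setIntegral_eq_zero_of_forall_eq_zero fun s hs ↦ hneg s hs.2
  have hshift : IntervalIntegrable (fun s ↦ Z (s - c)) volume 0 t := by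
    simpa using (hint (0 - c) (t - c)).comp_sub_right c
  rw [intervalIntegral.integral_comp_sub_left, sub_zero,
    intervalIntegral.integral_sub (hint _ _) hshift, intervalIntegral.integral_comp_sub_right,
    zero_sub, ← intervalIntegral.integral_add_adjacent_intervals (hint (-c) 0) (hint 0 (t - c)),
    hzero, zero_add, intervalIntegral.integral_interval_sub_left (hint _ _) (hint _ _)]

-- Integrate `∑ i, p i * (Z s - Z (s - x i)) = z s` over `[0, t]`.
theorem hasSum_mul_integral_comp_sub_of_renewal [Countable I] (hp : ∀ i, 0 ≤ p i)
    (hsum : HasSum p 1) (hx : ∀ i, 0 ≤ x i) (hmeas : Measurable Z) (hneg : ∀ t < 0, Z t = 0)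
    (hbdd : ∀ t, ∃ C, ∀ s ≤ t, |Z s| ≤ C)
    (hrenewal : ∀ s, 0 ≤ s → HasSum (fun i ↦ p i * Z (s - x i)) (Z s - z s)) {t : ℝ}
    (ht : 0 ≤ t) :
    HasSum (fun i ↦ p i * ∫ y in 0..x i, Z (t - y)) (∫ s in 0..t, z s) := by
  obtain ⟨C, hC⟩ := hbdd t
  have hint := intervalIntegrable_of_forall_abs_le hmeas hbdd
  have hIoc {s : ℝ} (hs : s ∈ uIoc 0 t) : 0 ≤ s ∧ s ≤ t := by
    rw [uIoc_of_le ht] at hs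
    exact ⟨hs.1.le, hs.2⟩
  have := intervalIntegral.hasSum_integral_of_dominated_convergence (μ := volume) (a := 0) (b := t)
    (F := fun i s ↦ p i * (Z s - Z (s - x i))) (f := z) (fun i _ ↦ p i * (C + C))
    (fun i ↦ by fun_prop)
    (fun i ↦ .of_forall fun s hs ↦ by
      rw [norm_mul, Real.norm_of_nonneg (hp i)]
      exact mul_le_mul_of_nonneg_left ((abs_sub _ _).trans (add_le_add (hC s (hIoc hs).2)
        (hC _ (by linarith [hx i, (hIoc hs).2])))) (hp i))
    (.of_forall fun _ _ ↦ hsum.summable.mul_right _) (by simp)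
    (.of_forall fun s hs ↦ by
      simpa [mul_sub] using (hsum.mul_right (Z s)).sub (hrenewal s (hIoc hs).1))
  refine this.congr_fun fun i ↦ ?_
  rw [integral_comp_sub_eq_integral_sub_comp_sub hint hneg t (hx i),
    intervalIntegral.integral_const_mul]

end ConservationLaw

section ShortWords

variable {I : Type*} {x : I → ℝ} {t : ℝ}

/-- The words of total length at most `t`, when the letter `i` has length `x i`. For
`x i = -log (α i)` this is the paper's `A_λ` with `λ = exp (-t)`. -/
def shortWords (x : I → ℝ) (t : ℝ) : Set (List I) := {v | (v.map x).sum ≤ t}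

theorem shortWords_mono (x : I → ℝ) : Monotone (shortWords x) := fun _ _ hst _ hv ↦ hv.trans hst

theorem shortWords_eq_empty (hx : ∀ i, 0 ≤ x i) (ht : t < 0) : shortWords x t = ∅ :=
  eq_empty_of_forall_notMem fun _ hv ↦
    (hv.trans_lt ht).not_ge (List.sum_nonneg (List.forall_mem_map.2 fun i _ ↦ hx i))

theorem nil_mem_shortWords (ht : 0 ≤ t) : [] ∈ shortWords x t := by simpa [shortWords] using ht

theorem cons_mem_shortWords {i : I} {v : List I} :
    i :: v ∈ shortWords x t ↔ v ∈ shortWords x (t - x i) := by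
  simp [shortWords, le_sub_iff_add_le']

theorem finite_shortWords (hx : ∀ i, 0 < x i) (htop : Tendsto x cofinite atTop) (t : ℝ) :
    (shortWords x t).Finite := by
  cases isEmpty_or_nonempty I
  · exact toFinite _
  obtain ⟨i₀, hi₀⟩ := htop.exists_forall_le
  have hfin : {i | x i ≤ t}.Finite := by
    simpa only [not_lt] using eventually_cofinite.1 (htop.eventually_gt_atTop t)
  have : Finite {i // x i ≤ t} := hfin
  refine ((List.finite_length_le {i // x i ≤ t} ⌊t / x i₀⌋₊).image
    (List.map Subtype.val)).subset fun v hv ↦ ?_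
  have hnonneg : ∀ a ∈ v.map x, 0 ≤ a := List.forall_mem_map.2 fun i _ ↦ (hx i).le
  have hletter : ∀ i ∈ v, x i ≤ t := fun i hi ↦
    (List.single_le_sum hnonneg _ (List.mem_map_of_mem hi)).trans hv
  have hlength : v.length * x i₀ ≤ t := by
    have := List.card_nsmul_le_sum (v.map x) (x i₀) (List.forall_mem_map.2 fun i _ ↦ hi₀ i)
    rw [List.length_map, nsmul_eq_mul] at this
    exact this.trans hv
  lift v to List {i // x i ≤ t} using hletter
  rw [List.length_map] at hlength
  exact mem_image_of_mem _ (Nat.le_floor ((le_div_iff₀ (hx i₀)).2 hlength))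

theorem hasSum_indicator_one_ncard {α : Type*} {s : Set α} (hs : s.Finite) :
    HasSum (s.indicator (1 : α → ℝ)) s.ncard := by
  have := hasSum_sum_of_ne_finset_zero (L := .unconditional α) (f := s.indicator (1 : α → ℝ))
    (s := hs.toFinset) fun a ha ↦ indicator_of_notMem (by simpa using ha) _
  rw [Finset.sum_congr rfl fun a ha ↦ indicator_of_mem (hs.mem_toFinset.1 ha) _] at this
  simpa [ncard_eq_toFinset_card s hs] using this

-- Sort the nonempty words by their first letter.
theorem hasSum_ncard_shortWords_sub (hfin : ∀ t, (shortWords x t).Finite) (ht : 0 ≤ t) :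
    HasSum (fun i ↦ ((shortWords x (t - x i)).ncard : ℝ)) ((shortWords x t).ncard - 1) := by
  have hnonempty : HasSum ((shortWords x t \ {[]}).indicator (1 : List I → ℝ))
      ((shortWords x t).ncard - 1) := by
    have := hasSum_indicator_one_ncard ((hfin t).sdiff (t := {[]}))
    rwa [ncard_sdiff_singleton_of_mem (nil_mem_shortWords ht), Nat.cast_sub, Nat.cast_one] at this
    exact ncard_pos (hfin t) |>.2 ⟨_, nil_mem_shortWords ht⟩
  have hcons : Function.Injective fun q : I × List I ↦ q.1 :: q.2 := fun q r h ↦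
    Prod.ext (List.cons.inj h).1 (List.cons.inj h).2
  have hsplit := (hcons.hasSum_iff (f := (shortWords x t \ {[]}).indicator (1 : List I → ℝ))
    fun v hv ↦ ?_).2 hnonempty
  · refine hsplit.prod_fiberwise fun i ↦
      (hasSum_indicator_one_ncard (hfin (t - x i))).congr_fun fun v ↦ ?_
    classical simp [indicator_apply, cons_mem_shortWords]
  · cases v with
    | nil => simp
    | cons i v => exact absurd ⟨(i, v), rfl⟩ hv

end ShortWords

section NormalizedWordCount

variable {I : Type*} {x : I → ℝ} {s t : ℝ}

/-- The number of words of length at most `t`, normalised by its exponential growth rate: the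
paper's `Z(t) = e^{-t} |A_{e^{-t}}|`. -/
noncomputable def normalizedWordCount (x : I → ℝ) (t : ℝ) : ℝ :=
  Real.exp (-t) * (shortWords x t).ncard

theorem normalizedWordCount_nonneg (x : I → ℝ) (t : ℝ) : 0 ≤ normalizedWordCount x t := by
  unfold normalizedWordCount
  positivity

theorem normalizedWordCount_of_neg (hx : ∀ i, 0 ≤ x i) (ht : t < 0) :
    normalizedWordCount x t = 0 := by
  simp [normalizedWordCount, shortWords_eq_empty hx ht]

theorem measurable_normalizedWordCount (hfin : ∀ t, (shortWords x t).Finite) :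
    Measurable (normalizedWordCount x) := by
  have hmono : Monotone fun t ↦ ((shortWords x t).ncard : ℝ) := fun s t hst ↦
    Nat.cast_le.2 (ncard_le_ncard (shortWords_mono x hst) (hfin t))
  exact (Real.measurable_exp.comp measurable_neg).mul hmono.measurable

theorem exp_sub_mul_normalizedWordCount_le (hfin : ∀ t, (shortWords x t).Finite) (hst : s ≤ t) :
    Real.exp (s - t) * normalizedWordCount x s ≤ normalizedWordCount x t := by
  rw [normalizedWordCount, ← mul_assoc, ← Real.exp_add, show s - t + -s = -t by ring]
  exact mul_le_mul_of_nonneg_left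
    (Nat.cast_le.2 (ncard_le_ncard (shortWords_mono x hst) (hfin t))) (Real.exp_pos _).le

theorem abs_normalizedWordCount_le_ncard (hx : ∀ i, 0 ≤ x i)
    (hfin : ∀ t, (shortWords x t).Finite) (hst : s ≤ t) :
    |normalizedWordCount x s| ≤ (shortWords x t).ncard := by
  rw [abs_of_nonneg (normalizedWordCount_nonneg x s)]
  rcases lt_or_ge s 0 with hs | hs
  · simp [normalizedWordCount_of_neg hx hs]
  · calc
      _ ≤ 1 * ((shortWords x s).ncard : ℝ) :=
        mul_le_mul_of_nonneg_right (Real.exp_le_one_iff.2 (neg_nonpos.2 hs)) (Nat.cast_nonneg _)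
      _ ≤ _ := by
        rw [one_mul]
        exact Nat.cast_le.2 (ncard_le_ncard (shortWords_mono x hst) (hfin t))

theorem hasSum_exp_neg_mul_normalizedWordCount_sub (hfin : ∀ t, (shortWords x t).Finite)
    (ht : 0 ≤ t) :
    HasSum (fun i ↦ Real.exp (-x i) * normalizedWordCount x (t - x i))
      (normalizedWordCount x t - Real.exp (-t)) := by
  have := (hasSum_ncard_shortWords_sub hfin ht).mul_left (Real.exp (-t))
  rw [mul_sub, mul_one] at this
  refine this.congr_fun fun i ↦ ?_
  rw [normalizedWordCount, ← mul_assoc, ← Real.exp_add, show -x i + -(t - x i) = -t by ring]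

theorem hasSum_exp_neg_mul_integral_normalizedWordCount [Countable I] (hx : ∀ i, 0 ≤ x i)
    (hfin : ∀ t, (shortWords x t).Finite) (hsum : HasSum (fun i ↦ Real.exp (-x i)) 1)
    (ht : 0 ≤ t) :
    HasSum (fun i ↦ Real.exp (-x i) * ∫ y in 0..x i, normalizedWordCount x (t - y))
      (1 - Real.exp (-t)) := by
  have hint : ∫ s in 0..t, Real.exp (-s) = 1 - Real.exp (-t) := by
    simp [intervalIntegral.integral_comp_neg Real.exp]
  rw [← hint]
  exact hasSum_mul_integral_comp_sub_of_renewal (fun i ↦ (Real.exp_pos _).le) hsum hx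
    (measurable_normalizedWordCount hfin) (fun t ↦ normalizedWordCount_of_neg hx)
    (fun t ↦ ⟨_, fun s ↦ abs_normalizedWordCount_le_ncard hx hfin⟩)
    (fun s ↦ hasSum_exp_neg_mul_normalizedWordCount_sub hfin) ht

theorem mul_exp_neg_mul_normalizedWordCount_le_integral (hx : ∀ i, 0 ≤ x i)
    (hfin : ∀ t, (shortWords x t).Finite) (t : ℝ) {c : ℝ} (hc : 0 ≤ c) :
    c * (Real.exp (-c) * normalizedWordCount x t) ≤
      ∫ y in 0..c, normalizedWordCount x (t + c - y) := by
  have hint : IntervalIntegrable (fun y ↦ normalizedWordCount x (t + c - y)) volume 0 c := by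
    simpa using (intervalIntegrable_of_forall_abs_le (measurable_normalizedWordCount hfin)
      (fun t ↦ ⟨_, fun s ↦ abs_normalizedWordCount_le_ncard hx hfin⟩)
      (t + c - 0) (t + c - c)).comp_sub_left (t + c)
  calc
    _ = ∫ _ in 0..c, Real.exp (-c) * normalizedWordCount x t := by
      rw [intervalIntegral.integral_const, sub_zero, smul_eq_mul]
    _ ≤ _ := intervalIntegral.integral_mono_on hc intervalIntegrable_const hint fun y hy ↦
      (mul_le_mul_of_nonneg_right (Real.exp_le_exp.2 (by linarith [hy.1]))
        (normalizedWordCount_nonneg x t)).trans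
        (exp_sub_mul_normalizedWordCount_le hfin (by linarith [hy.2]))

-- Over `[t, t + x i]` the function falls by at most the factor `exp (-x i)`, while the conservation
-- law at `t + x i` bounds its integral there.
theorem exists_abs_normalizedWordCount_le [Countable I] (hx : ∀ i, 0 < x i)
    (hfin : ∀ t, (shortWords x t).Finite) (hsum : HasSum (fun i ↦ Real.exp (-x i)) 1) :
    ∃ C, ∀ t, |normalizedWordCount x t| ≤ C := by
  obtain ⟨i⟩ : Nonempty I := not_isEmpty_iff.1 fun _ ↦ one_ne_zero (hsum.unique hasSum_empty)
  have hx₀ i := (hx i).le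
  have hZ := normalizedWordCount_nonneg x
  set K := Real.exp (-x i) * (x i * Real.exp (-x i))
  have hK : 0 < K := mul_pos (Real.exp_pos _) (mul_pos (hx i) (Real.exp_pos _))
  refine ⟨1 / K, fun t ↦ ?_⟩
  rw [abs_of_nonneg (hZ t), le_div_iff₀' hK]
  rcases lt_or_ge t 0 with ht | ht
  · simp [normalizedWordCount_of_neg hx₀ ht]
  calc
    K * normalizedWordCount x t
      = Real.exp (-x i) * (x i * (Real.exp (-x i) * normalizedWordCount x t)) := by ring
    _ ≤ Real.exp (-x i) * ∫ y in 0..x i, normalizedWordCount x (t + x i - y) :=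
      mul_le_mul_of_nonneg_left
        (mul_exp_neg_mul_normalizedWordCount_le_integral hx₀ hfin t (hx₀ i)) (Real.exp_pos _).le
    _ ≤ 1 - Real.exp (-(t + x i)) :=
      le_hasSum (hasSum_exp_neg_mul_integral_normalizedWordCount hx₀ hfin hsum
        (add_nonneg ht (hx₀ i))) i fun j _ ↦ mul_nonneg (Real.exp_pos _).le
          (intervalIntegral.integral_nonneg (hx₀ j) fun y _ ↦ hZ _)
    _ ≤ 1 := sub_le_self _ (Real.exp_pos _).le

theorem slowlyDecreasing_normalizedWordCount (hfin : ∀ t, (shortWords x t).Finite) {C : ℝ}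
    (hC : ∀ t, |normalizedWordCount x t| ≤ C) : SlowlyDecreasing (normalizedWordCount x) := by
  have hC₀ : 0 ≤ C := (abs_nonneg _).trans (hC 0)
  intro ε hε
  refine ⟨ε / (C + 1), by positivity, .of_forall fun s t ht ↦ ?_⟩
  have hst : (t - s) * (C + 1) ≤ ε := (le_div_iff₀ (by linarith)).1 (by linarith [ht.2])
  have hexp : 1 - (t - s) ≤ Real.exp (s - t) := by linarith [Real.add_one_le_exp (s - t)]
  have hZ := normalizedWordCount_nonneg x s
  have hZC : normalizedWordCount x s ≤ C := (le_abs_self _).trans (hC s)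
  calc
    normalizedWordCount x s
      = (1 - (t - s)) * normalizedWordCount x s + (t - s) * normalizedWordCount x s := by ring
    _ ≤ Real.exp (s - t) * normalizedWordCount x s + (t - s) * (C + 1) := by
      have := sub_nonneg.2 ht.1
      gcongr
      linarith
    _ ≤ normalizedWordCount x t + ε :=
      add_le_add (exp_sub_mul_normalizedWordCount_le hfin ht.1) hst

theorem tendsto_atTop_of_summable_exp_neg (hx : Summable fun i ↦ Real.exp (-x i)) :
    Tendsto x cofinite atTop := by
  simpa only [Function.comp_def, tendsto_neg_atBot_iff] using
    Real.tendsto_exp_comp_nhds_zero.1 hx.tendsto_cofinite_zero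

theorem tendsto_normalizedWordCount [Countable I] (hx : ∀ i, 0 < x i)
    (hsum : HasSum (fun i ↦ Real.exp (-x i)) 1)
    (hmean : Summable fun i ↦ Real.exp (-x i) * x i)
    (hdense : Dense (AddSubgroup.closure (range x) : Set ℝ)) :
    Tendsto (normalizedWordCount x) atTop (𝓝 (1 / ∑' i, Real.exp (-x i) * x i)) := by
  have hx₀ i := (hx i).le
  have hp i : 0 ≤ Real.exp (-x i) := (Real.exp_pos _).le
  have hfin := finite_shortWords hx (tendsto_atTop_of_summable_exp_neg hsum.summable)
  have hmeas := measurable_normalizedWordCount hfin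
  obtain ⟨C, hC⟩ := exists_abs_normalizedWordCount_le hx hfin hsum
  have hexp := Real.tendsto_exp_neg_atTop_nhds_zero
  have hZ : Tendsto (fun u ↦ normalizedWordCount x u -
      ∑' i, Real.exp (-x i) * normalizedWordCount x (u - x i)) atTop (𝓝 0) :=
    hexp.congr' ((eventually_ge_atTop 0).mono fun u hu ↦ by
      simp only [(hasSum_exp_neg_mul_normalizedWordCount_sub hfin hu).tsum_eq, sub_sub_cancel])
  have hJ : Tendsto (fun u ↦ ∫ y, normalizedWordCount x (u - y)
      ∂integratedTail (fun i ↦ Real.exp (-x i)) x) atTop (𝓝 1) := by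
    have := isFiniteMeasure_integratedTail hp hx₀ hmean
    have hlim := hexp.const_sub 1
    rw [sub_zero] at hlim
    refine hlim.congr' ((eventually_ge_atTop 0).mono fun u hu ↦ ?_)
    exact (hasSum_exp_neg_mul_integral_normalizedWordCount hx₀ hfin hsum hu).unique
      (hasSum_integral_integratedTail hp hx₀ (.of_bound
        (hmeas.comp (measurable_const.sub measurable_id)).aestronglyMeasurable C
        (.of_forall fun y ↦ hC (u - y))))
  exact (slowlyDecreasing_normalizedWordCount hfin hC).tendsto_of_renewal
    (fun i ↦ Real.exp_pos _) hsum hx hmean hdense hmeas hC hZ hJ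

end NormalizedWordCount

section WordWeight

variable {I : Type*}

theorem wordWeight_exp_neg (x : I → ℝ) (v : List I) :
    wordWeight (fun i ↦ Real.exp (-x i)) v = Real.exp (-(v.map x).sum) := by
  rw [wordWeight, List.sum_neg, Real.exp_list_sum, List.map_map, List.map_map]
  rfl

theorem shortWords_neg_log (x : I → ℝ) {lam : ℝ} (hlam : 0 < lam) :
    shortWords x (-Real.log lam) = {v | lam ≤ wordWeight (fun i ↦ Real.exp (-x i)) v} := by
  ext v
  rw [mem_ofPred_eq, wordWeight_exp_neg, ← Real.log_le_iff_le_exp hlam, le_neg]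
  rfl

theorem normalizedWordCount_neg_log (x : I → ℝ) {lam : ℝ} (hlam : 0 < lam) :
    normalizedWordCount x (-Real.log lam) =
      lam * (Nat.card {v : List I | lam ≤ wordWeight (fun i ↦ Real.exp (-x i)) v} : ℝ) := by
  rw [normalizedWordCount, shortWords_neg_log x hlam, neg_neg, Real.exp_log hlam,
    Nat.card_coe_set_eq]

end WordWeight

/-- Blackwell renewal asymptotics in the higher-rank (non-lattice) case:
if the group generated by `{−log α_i}` is not cyclic and
`H = −Σ α_i log α_i < ∞`, then `λ |A_λ| → 1/H` as `λ → 0⁺`. -/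
theorem higher_rank_renewal_asymptotics {I : Type*} [Countable I]
    (α : I → ℝ) (hpos : ∀ i, 0 < α i) (hsum : HasSum α 1)
    (hrank : ¬ ∃ c : ℝ, ∀ i : I, ∃ k : ℤ, -Real.log (α i) = k * c)
    (hH : Summable fun i => α i * (-Real.log (α i))) :
    Filter.Tendsto
      (fun lam : ℝ => lam * (Nat.card {v : List I | lam ≤ wordWeight α v} : ℝ))
      (nhdsWithin 0 (Set.Ioi 0))
      (nhds (1 / ∑' i : I, α i * (-Real.log (α i)))) := by
  obtain ⟨x, rfl⟩ : ∃ x : I → ℝ, α = fun i ↦ Real.exp (-x i) :=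
    ⟨fun i ↦ -Real.log (α i), funext fun i ↦ by rw [neg_neg, Real.exp_log (hpos i)]⟩
  simp only [Real.log_exp, neg_neg] at hrank hH ⊢
  have hx (i) : 0 < x i := by
    have := nontrivial_of_not_exists_zmultiples hrank
    obtain ⟨j, hij⟩ := exists_ne i
    have := lt_hasSum hsum i (fun k _ ↦ (hpos k).le) j hij (hpos j)
    exact neg_lt_zero.1 (Real.exp_lt_one_iff.1 this)
  have hlog : Tendsto (fun lam ↦ -Real.log lam) (𝓝[>] 0) atTop :=
    tendsto_neg_atBot_atTop.comp Real.tendsto_log_nhdsGT_zero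
  refine ((tendsto_normalizedWordCount hx hsum hH
    (dense_addSubgroupClosure_range_of_not_exists_zmultiples hrank)).comp hlog).congr' ?_
  filter_upwards [self_mem_nhdsWithin] with lam hlam using normalizedWordCount_neg_log x hlam
end
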